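/- arXiv:math/0601254 — 3 statements merged into one kernel-verified Lean document; each statement's English description precedes it below -/
import Mathlib

section
/- Let L be a commutative subspace lattice on H and Φ a rank preserving linear map on Alg L. Let N ∈ L with dim N = 1 and dim N₋^⊥ ≥ 2, let x be a nonzero vector in N, let f, g be linearly independent vectors in N₋^⊥, and suppose u, v, p, q are nonzero vectors in H with Φ(x⊗f*) = u⊗v* and Φ(x⊗g*) = p⊗q*. Then exactly one of the following holds: (1) u ∼ p and v ≁ q; (2) u ≁ p and v ∼ q. -/
open scoped InnerProductSpace

noncomputable section

/-- The join (closed linear span) of a family of subspaces of a Hilbert space. -/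
def closedJoin {H : Type*} [NormedAddCommGroup H] [InnerProductSpace ℂ H]
    (S : Set (Submodule ℂ H)) : Submodule ℂ H :=
  (sSup S).topologicalClosure

/-- A subspace lattice on `H`: a family of closed subspaces containing `{0}` and `H`,
closed under arbitrary intersections and arbitrary closed linear spans. -/
structure IsSubspaceLattice {H : Type*} [NormedAddCommGroup H] [InnerProductSpace ℂ H]
    (L : Set (Submodule ℂ H)) : Prop where
  isClosed : ∀ E ∈ L, IsClosed (E : Set H)
  bot_mem : ⊥ ∈ L
  top_mem : ⊤ ∈ L
  sInf_mem : ∀ S : Set (Submodule ℂ H), S ⊆ L → sInf S ∈ L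
  join_mem : ∀ S : Set (Submodule ℂ H), S ⊆ L → closedJoin S ∈ L

/-- `M₋`: the join of all members of `L` that do not contain `M`. -/
def minus {H : Type*} [NormedAddCommGroup H] [InnerProductSpace ℂ H]
    (L : Set (Submodule ℂ H)) (M : Submodule ℂ H) : Submodule ℂ H :=
  closedJoin {E | E ∈ L ∧ ¬ M ≤ E}

open Classical in
/-- The orthogonal projection of `H` onto a closed subspace `E`, as an operator on `H`
(junk value `0` if `E` is not closed). -/
def projOf {H : Type*} [NormedAddCommGroup H] [InnerProductSpace ℂ H] [CompleteSpace H]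
    (E : Submodule ℂ H) : H →L[ℂ] H :=
  if h : IsClosed (E : Set H) then
    haveI : CompleteSpace E := h.completeSpace_coe
    E.subtypeL.comp (Submodule.orthogonalProjection E)
  else 0

/-- A commutative subspace lattice: the orthogonal projections onto members commute. -/
structure IsCSL {H : Type*} [NormedAddCommGroup H] [InnerProductSpace ℂ H] [CompleteSpace H]
    (L : Set (Submodule ℂ H)) extends IsSubspaceLattice L : Prop where
  commutes : ∀ E ∈ L, ∀ F ∈ L, projOf E * projOf F = projOf F * projOf E

/-- Complete distributivity of the lattice `L` (meets are intersections, joins are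
closed linear spans). -/
def IsCompletelyDistributive {H : Type*} [NormedAddCommGroup H] [InnerProductSpace ℂ H]
    (L : Set (Submodule ℂ H)) : Prop :=
  ∀ (I : Type) (J : I → Type) (E : (i : I) → J i → Submodule ℂ H),
    (∀ i j, E i j ∈ L) →
     ((⨅ i, closedJoin (Set.range (E i)))
        = closedJoin (Set.range fun φ : (∀ i, J i) => ⨅ i, E i (φ i)))
    ∧ (closedJoin (Set.range fun i => ⨅ j, E i j)
        = ⨅ φ : (∀ i, J i), closedJoin (Set.range fun i => E i (φ i)))

/-- `Alg L`: all bounded operators leaving every member of `L` invariant. -/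
def algL {H : Type*} [NormedAddCommGroup H] [InnerProductSpace ℂ H]
    (L : Set (Submodule ℂ H)) : Set (H →L[ℂ] H) :=
  {T | ∀ E ∈ L, ∀ x ∈ E, T x ∈ E}

/-- The rank one operator `x ⊗ f* : h ↦ ⟨h, f⟩ x`. -/
def rankOne {H : Type*} [NormedAddCommGroup H] [InnerProductSpace ℂ H]
    (x f : H) : H →L[ℂ] H :=
  (innerSL ℂ f).smulRight x

/-- The rank of a bounded operator: the dimension of its range. -/
def opRank {H : Type*} [NormedAddCommGroup H] [InnerProductSpace ℂ H]
    (T : H →L[ℂ] H) : Cardinal :=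
  Module.rank ℂ (LinearMap.range (T : H →ₗ[ℂ] H))

/-- `Φ` is a linear map of `Alg L` into itself. -/
structure IsLinearOnAlg {H : Type*} [NormedAddCommGroup H] [InnerProductSpace ℂ H]
    (L : Set (Submodule ℂ H)) (Φ : (H →L[ℂ] H) → (H →L[ℂ] H)) : Prop where
  maps : ∀ A ∈ algL L, Φ A ∈ algL L
  map_add : ∀ A ∈ algL L, ∀ B ∈ algL L, Φ (A + B) = Φ A + Φ B
  map_smul : ∀ (c : ℂ), ∀ A ∈ algL L, Φ (c • A) = c • Φ A

/-- `Φ` preserves the rank of every finite rank operator in `Alg L`. -/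
def RankPreserving {H : Type*} [NormedAddCommGroup H] [InnerProductSpace ℂ H]
    (L : Set (Submodule ℂ H)) (Φ : (H →L[ℂ] H) → (H →L[ℂ] H)) : Prop :=
  ∀ A ∈ algL L, opRank A < Cardinal.aleph0 → opRank (Φ A) = opRank A

/-- `a ∼ b`: (nonzero) vectors `a` and `b` are linearly dependent. -/
def Dep {H : Type*} [NormedAddCommGroup H] [InnerProductSpace ℂ H] (a b : H) : Prop :=
  ∃ c : ℂ, c ≠ 0 ∧ b = c • a

/-- `N` is consistent with respect to `Φ`. -/
def Consistent {H : Type*} [NormedAddCommGroup H] [InnerProductSpace ℂ H]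
    (L : Set (Submodule ℂ H)) (Φ : (H →L[ℂ] H) → (H →L[ℂ] H))
    (N : Submodule ℂ H) : Prop :=
  N ≠ ⊥ ∧ minus L N ≠ ⊤ ∧
    ∃ (U : N →ₗ[ℂ] H) (V : ((minus L N)ᗮ : Submodule ℂ H) →ₗ[ℂ] H),
      ∀ (x : N) (f : ((minus L N)ᗮ : Submodule ℂ H)),
        Φ (rankOne (x : H) (f : H)) = rankOne (U x) (V f)

/-- `N` is twisted with respect to `Φ`. -/
def Twisted {H : Type*} [NormedAddCommGroup H] [InnerProductSpace ℂ H]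
    (L : Set (Submodule ℂ H)) (Φ : (H →L[ℂ] H) → (H →L[ℂ] H))
    (N : Submodule ℂ H) : Prop :=
  N ≠ ⊥ ∧ minus L N ≠ ⊤ ∧
    ∃ (U : ((minus L N)ᗮ : Submodule ℂ H) →ₗ⋆[ℂ] H) (V : N →ₗ⋆[ℂ] H),
      ∀ (x : N) (f : ((minus L N)ᗮ : Submodule ℂ H)),
        Φ (rankOne (x : H) (f : H)) = rankOne (U f) (V x)

/-- `N` is isolated: `dim N = 1` and `N^⊥ ∈ L`. -/
def Isolated {H : Type*} [NormedAddCommGroup H] [InnerProductSpace ℂ H]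
    (L : Set (Submodule ℂ H)) (N : Submodule ℂ H) : Prop :=
  Module.rank ℂ N = 1 ∧ Nᗮ ∈ L

/-- The family `F` of all `N ∈ L` with `N ≠ {0}` and `N₋ ≠ H`. -/
def famF {H : Type*} [NormedAddCommGroup H] [InnerProductSpace ℂ H]
    (L : Set (Submodule ℂ H)) : Set (Submodule ℂ H) :=
  {N | N ∈ L ∧ N ≠ ⊥ ∧ minus L N ≠ ⊤}

/-- Subspaces are comparable if one contains the other. -/
def Comparable' {H : Type*} [NormedAddCommGroup H] [InnerProductSpace ℂ H]
    (M N : Submodule ℂ H) : Prop :=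
  M ≤ N ∨ N ≤ M

/-- There is a chain in `F` from `M` to `N`. -/
def ChainConn {H : Type*} [NormedAddCommGroup H] [InnerProductSpace ℂ H]
    (L : Set (Submodule ℂ H)) (M N : Submodule ℂ H) : Prop :=
  ∃ (n : ℕ) (c : Fin (n + 1) → Submodule ℂ H),
    (∀ k, c k ∈ famF L) ∧ c 0 = M ∧ c (Fin.last n) = N ∧
      ∀ k : Fin n, Comparable' (c k.castSucc) (c k.succ)

/-- `𝔊_N`: all members of `F` that can be connected to `N` by a chain. -/
def GSet {H : Type*} [NormedAddCommGroup H] [InnerProductSpace ℂ H]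
    (L : Set (Submodule ℂ H)) (N : Submodule ℂ H) : Set (Submodule ℂ H) :=
  {M | M ∈ famF L ∧ ChainConn L N M}

end

theorem rankOne_apply' {H : Type*} [NormedAddCommGroup H] [InnerProductSpace ℂ H]
    (x f h : H) : rankOne x f h = (inner ℂ f h) • x := by
  simp [rankOne]

theorem rankOne_mem_algL {H : Type*} [NormedAddCommGroup H] [InnerProductSpace ℂ H]
    (L : Set (Submodule ℂ H)) (N : Submodule ℂ H) (x f : H)
    (hx : x ∈ N) (hf : f ∈ (minus L N)ᗮ) : rankOne x f ∈ algL L := by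
  intro E hE y hy
  rw [rankOne_apply']
  by_cases h : N ≤ E
  · exact E.smul_mem _ (h hx)
  · have hy' : y ∈ minus L N :=
      Submodule.le_topologicalClosure _
        ((le_sSup (show E ∈ {E | E ∈ L ∧ ¬ N ≤ E} from ⟨hE, h⟩)) hy)
    rw [Submodule.inner_left_of_mem_orthogonal hy' hf]
    simp

theorem opRank_rankOne_le {H : Type*} [NormedAddCommGroup H] [InnerProductSpace ℂ H]
    (x f : H) : opRank (rankOne x f) ≤ 1 := by
  unfold opRank
  rw [rank_submodule_le_one_iff']
  refine ⟨x, ?_⟩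
  rintro _ ⟨h, rfl⟩
  exact Submodule.mem_span_singleton.2 ⟨inner ℂ f h, (rankOne_apply' x f h).symm⟩

theorem opRank_zero_imp {H : Type*} [NormedAddCommGroup H] [InnerProductSpace ℂ H]
    (T : H →L[ℂ] H) (h : opRank T = 0) : T = 0 := by
  unfold opRank at h
  rw [Submodule.rank_eq_zero, LinearMap.range_eq_bot] at h
  ext y
  exact LinearMap.congr_fun h y

theorem opRank_zero' {H : Type*} [NormedAddCommGroup H] [InnerProductSpace ℂ H] :
    opRank (0 : H →L[ℂ] H) = 0 := by
  unfold opRank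
  rw [Submodule.rank_eq_zero, LinearMap.range_eq_bot]
  rfl

/-- If `v, q` are not proportional, some vector is orthogonal to `v` but not to `q`. -/
theorem exists_sep {H : Type*} [NormedAddCommGroup H] [InnerProductSpace ℂ H]
    (v q : H) (hv : v ≠ 0) (h : ∀ c : ℂ, q ≠ c • v) :
    ∃ y : H, inner ℂ v y = 0 ∧ inner ℂ q y ≠ 0 := by
  have hvv : inner ℂ v v ≠ 0 := inner_self_ne_zero.2 hv
  set c : ℂ := inner ℂ v q / inner ℂ v v with hc
  have h1 : inner ℂ v (q - c • v) = 0 := by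
    rw [inner_sub_right, inner_smul_right, hc, div_mul_cancel₀ _ hvv, sub_self]
  refine ⟨q - c • v, h1, fun h2 => ?_⟩
  have h3 : inner ℂ (q - c • v) (q - c • v) = 0 := by
    rw [inner_sub_left, inner_smul_left, h1, h2]; simp
  exact h c (sub_eq_zero.1 (inner_self_eq_zero.1 h3))

theorem Dep.symm' {H : Type*} [NormedAddCommGroup H] [InnerProductSpace ℂ H] {a b : H}
    (h : Dep a b) : Dep b a := by
  obtain ⟨c, hc, rfl⟩ := h
  exact ⟨c⁻¹, inv_ne_zero hc, by rw [smul_smul, inv_mul_cancel₀ hc, one_smul]⟩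

theorem not_dep_ne {H : Type*} [NormedAddCommGroup H] [InnerProductSpace ℂ H] {a b : H}
    (hb : b ≠ 0) (h : ¬ Dep a b) (c : ℂ) : b ≠ c • a := by
  rintro rfl
  refine h ⟨c, ?_, rfl⟩
  rintro rfl
  simp at hb

theorem stmt_3 {H : Type*} [NormedAddCommGroup H] [InnerProductSpace ℂ H]
    [CompleteSpace H] [TopologicalSpace.SeparableSpace H]
    (L : Set (Submodule ℂ H)) (hL : IsCSL L)
    (Φ : (H →L[ℂ] H) → (H →L[ℂ] H)) (hlin : IsLinearOnAlg L Φ)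
    (hrank : RankPreserving L Φ)
    (N : Submodule ℂ H) (hN : N ∈ L)
    (hdimN : Module.rank ℂ N = 1)
    (hdimN' : 2 ≤ Module.rank ℂ (((minus L N)ᗮ : Submodule ℂ H) : Type _))
    (x f g u v p q : H)
    (hx : x ∈ N) (hx0 : x ≠ 0)
    (hf : f ∈ (minus L N)ᗮ) (hg : g ∈ (minus L N)ᗮ) (hfg : LinearIndependent ℂ ![f, g])
    (hu : u ≠ 0) (hv : v ≠ 0) (hp : p ≠ 0) (hq : q ≠ 0)
    (hE : Φ (rankOne x f) = rankOne u v)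
    (hF : Φ (rankOne x g) = rankOne p q) :
    Xor' (Dep u p ∧ ¬ Dep v q) (¬ Dep u p ∧ Dep v q) := by
  have mf := rankOne_mem_algL L N x f hx hf
  have mg := rankOne_mem_algL L N x g hx hg
  have hfin : ∀ k : H, opRank (rankOne x k) < Cardinal.aleph0 := fun k =>
    (opRank_rankOne_le x k).trans_lt Cardinal.one_lt_aleph0
  have not_both : ¬ (Dep u p ∧ Dep v q) := by
    rintro ⟨⟨c, hc, hpc⟩, ⟨d, hd, hqd⟩⟩
    set k : ℂ := c * (starRingEnd ℂ) d with hk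
    have e1 : rankOne x (g + (-(starRingEnd ℂ) k) • f) = rankOne x g + (-k) • rankOne x f := by
      ext y
      simp only [rankOne_apply', ContinuousLinearMap.add_apply, ContinuousLinearMap.smul_apply,
        inner_add_left, inner_smul_left, add_smul, smul_smul, map_neg, Complex.conj_conj]
    have m' : rankOne x (g + (-(starRingEnd ℂ) k) • f) ∈ algL L :=
      rankOne_mem_algL L N x _ hx (Submodule.add_mem _ hg (Submodule.smul_mem _ _ hf))
    have ms : (-k) • rankOne x f ∈ algL L := fun E hE y hy => E.smul_mem _ (mf E hE y hy)
    have e2 : Φ (rankOne x (g + (-(starRingEnd ℂ) k) • f)) = 0 := by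
      rw [e1, hlin.map_add _ mg _ ms, hlin.map_smul _ _ mf, hE, hF, hpc, hqd]
      ext y
      simp only [rankOne_apply', ContinuousLinearMap.add_apply, ContinuousLinearMap.smul_apply,
        inner_smul_left, smul_smul, ContinuousLinearMap.zero_apply, hk]
      rw [← add_smul]
      convert zero_smul ℂ u using 2
      ring
    have e3 := hrank _ m' (hfin _)
    rw [e2, opRank_zero'] at e3
    have e4 := opRank_zero_imp _ e3.symm
    have e5 := congrArg (fun T => T (g + (-(starRingEnd ℂ) k) • f)) e4
    simp only [rankOne_apply', ContinuousLinearMap.zero_apply, smul_eq_zero, hx0, or_false,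
      inner_self_eq_zero] at e5
    have e6 := (LinearIndependent.pair_iff.1 hfg) (-(starRingEnd ℂ) k) 1
      (by rw [one_smul, add_comm]; exact e5)
    exact one_ne_zero e6.2
  have not_neither : ¬ (¬ Dep u p ∧ ¬ Dep v q) := by
    rintro ⟨h1, h2⟩
    have m' : rankOne x (f + g) ∈ algL L :=
      rankOne_mem_algL L N x _ hx (Submodule.add_mem _ hf hg)
    have e1 : rankOne x (f + g) = rankOne x f + rankOne x g := by
      ext y
      simp only [rankOne_apply', ContinuousLinearMap.add_apply, inner_add_left, add_smul]
    have e2 : Φ (rankOne x (f + g)) = rankOne u v + rankOne p q := by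
      rw [e1, hlin.map_add _ mf _ mg, hE, hF]
    have e3 : opRank (rankOne u v + rankOne p q) ≤ 1 := by
      rw [← e2, hrank _ m' (hfin _)]
      exact opRank_rankOne_le _ _
    unfold opRank at e3
    rw [rank_submodule_le_one_iff'] at e3
    obtain ⟨w, hw⟩ := e3
    obtain ⟨y, hy1, hy2⟩ := exists_sep v q hv (not_dep_ne hq h2)
    obtain ⟨z, hz1, hz2⟩ := exists_sep q v hq (not_dep_ne hv fun h => h2 h.symm')
    obtain ⟨a, ha⟩ := Submodule.mem_span_singleton.1 (hw ⟨y, rfl⟩)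
    obtain ⟨b, hb⟩ := Submodule.mem_span_singleton.1 (hw ⟨z, rfl⟩)
    simp only [ContinuousLinearMap.coe_coe, ContinuousLinearMap.add_apply, rankOne_apply', hy1,
      hz1, zero_smul, zero_add, add_zero] at ha hb
    have hb0 : b ≠ 0 := by
      rintro rfl
      rw [zero_smul] at hb
      exact (smul_ne_zero hz2 hu) hb.symm
    refine not_dep_ne hp h1 ((inner ℂ q y)⁻¹ * a * b⁻¹ * inner ℂ v z) ?_
    rw [mul_smul, ← hb, smul_smul, mul_assoc, inv_mul_cancel₀ hb0, mul_one, mul_smul, ha,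
      smul_smul, inv_mul_cancel₀ hy2, one_smul]
  unfold Xor'
  tauto
end

section
/- Let L be a completely distributive commutative subspace lattice on H and Φ a rank preserving linear map on Alg L such that every N ∈ F is consistent with respect to Φ. For each N ∈ F fix a linear map U_N : N → H and a linear map V_N : N₋^⊥ → H with Φ(x⊗f*) = (U_N x)⊗(V_N f)* for all x ∈ N and f ∈ N₋^⊥. Let M₀, M₁, …, Mₙ be a cycle in F (so Mₙ = M₀ and consecutive terms are comparable), and let λ₀, …, λ_{n-1} be nonzero complex numbers such that for each k: if M_k ⊆ M_{k+1} then U_{M_k} x = λ_k · U_{M_{k+1}} x for all x ∈ M_k and V_{M_{k+1}} f = conj(λ_k) · V_{M_k} f for all f ∈ (M_{k+1})₋^⊥, while if M_{k+1} ⊆ M_k then U_{M_{k+1}} x = λ_k⁻¹ · U_{M_k} x for all x ∈ M_{k+1} and V_{M_k} f = conj(λ_k⁻¹) · V_{M_{k+1}} f for all f ∈ (M_k)₋^⊥. Then λ₀ λ₁ ⋯ λ_{n-1} = 1. -/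
open scoped InnerProductSpace

namespace CSLCycle

variable {H : Type*} [NormedAddCommGroup H] [InnerProductSpace ℂ H]

/-- `U_A = a U_B` on `A`. -/
def Rel (U : (N : Submodule ℂ H) → (N →ₗ[ℂ] H)) (A B : Submodule ℂ H) (a : ℂ) : Prop :=
  a ≠ 0 ∧ A ≤ B ∧ ∀ (x : H) (h1 : x ∈ A) (h2 : x ∈ B), U A ⟨x, h1⟩ = a • U B ⟨x, h2⟩

/-- A zigzag step `A ⊆ B ⊇ C`. -/
structure Stp (F : Set (Submodule ℂ H)) (U : (N : Submodule ℂ H) → (N →ₗ[ℂ] H))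
    (A B C : Submodule ℂ H) (a b : ℂ) : Prop where
  hA : A ∈ F
  hB : B ∈ F
  hC : C ∈ F
  ra : Rel U A B a
  rb : Rel U C B b

/-- Zigzag paths. -/
inductive Zig (F : Set (Submodule ℂ H)) (U : (N : Submodule ℂ H) → (N →ₗ[ℂ] H)) :
    ℕ → Submodule ℂ H → Submodule ℂ H → ℂ → Prop
  | nil (A) : Zig F U 0 A A 1
  | cons {k A B C D a b c} : Stp F U A B C a b → Zig F U k C D c →
      Zig F U (k + 1) A D (a / b * c)

variable {F : Set (Submodule ℂ H)} {U : (N : Submodule ℂ H) → (N →ₗ[ℂ] H)}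

lemma Rel.trans {A B C : Submodule ℂ H} {a b : ℂ} (h : Rel U A B a) (h' : Rel U B C b) :
    Rel U A C (a * b) := by
  refine ⟨mul_ne_zero h.1 h'.1, h.2.1.trans h'.2.1, fun x h1 h2 => ?_⟩
  rw [h.2.2 x h1 (h.2.1 h1), h'.2.2 x (h.2.1 h1) h2, smul_smul]

lemma Zig.trans {k l : ℕ} {A B C : Submodule ℂ H} {c d : ℂ} (h : Zig F U k A B c)
    (h' : Zig F U l B C d) : Zig F U (k + l) A C (c * d) := by
  induction h with
  | nil A => simpa using h'
  | cons s _ ih =>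
    have := Zig.cons s (ih h')
    rw [← mul_assoc] at this
    rwa [Nat.add_right_comm]

lemma Stp.zig {A B C : Submodule ℂ H} {a b : ℂ} (h : Stp F U A B C a b) :
    Zig F U 1 A C (a / b) := by
  simpa using Zig.cons h (Zig.nil C)

lemma Zig.shrinkL {k : ℕ} {A C N : Submodule ℂ H} {c w : ℂ} (h : Zig F U k A C c)
    (hk : k ≠ 0) (hN : N ∈ F) (hr : Rel U N A w) : Zig F U k N C (w * c) := by
  cases h with
  | nil => exact absurd rfl hk
  | cons s t =>
    have := Zig.cons ⟨hN, s.hB, s.hC, hr.trans s.ra, s.rb⟩ t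
    convert this using 1
    ring

lemma Zig.shrinkR {k : ℕ} {A C N : Submodule ℂ H} {c w : ℂ} (h : Zig F U k A C c)
    (hk : k ≠ 0) (hN : N ∈ F) (hr : Rel U N C w) : Zig F U k A N (c / w) := by
  induction h with
  | nil => exact absurd rfl hk
  | @cons k A B C D a b c s t ih =>
    by_cases h0 : k = 0
    · subst h0
      cases t
      have := (Stp.mk s.hA s.hB hN s.ra (hr.trans s.rb)).zig
      convert this using 1
      simp only [mul_one]
      rw [div_div, mul_comm b]
    · have := Zig.cons s (ih h0 hr)
      convert this using 1
      ring

lemma seg (k : ℕ) : ∀ (A B : ℕ → Submodule ℂ H) (a b : ℕ → ℂ),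
    (∀ i < k, Stp F U (A i) (B i) (A (i + 1)) (a i) (b i)) →
    Zig F U k (A 0) (A k) (∏ i ∈ Finset.range k, a i / b i) := by
  induction k with
  | zero => intro A B a b _; simpa using Zig.nil (A 0)
  | succ k ih =>
    intro A B a b h
    rw [Finset.prod_range_succ', mul_comm]
    exact Zig.cons (h 0 (by omega)) (ih (fun i => A (i + 1)) (fun i => B (i + 1))
      (fun i => a (i + 1)) (fun i => b (i + 1)) fun i hi => h (i + 1) (by omega))

lemma Zig.exists_fun {k : ℕ} {X Y : Submodule ℂ H} {c : ℂ} (h : Zig F U k X Y c) :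
    ∃ (A B : ℕ → Submodule ℂ H) (a b : ℕ → ℂ),
    (∀ i < k, Stp F U (A i) (B i) (A (i + 1)) (a i) (b i)) ∧ A 0 = X ∧ A k = Y ∧
      c = ∏ i ∈ Finset.range k, a i / b i := by
  induction h with
  | nil A => exact ⟨fun _ => A, fun _ => A, fun _ => 1, fun _ => 1, by simp⟩
  | @cons k A B C D a b c s t ih =>
    obtain ⟨A', B', a', b', h, h0, hk, hc⟩ := ih
    refine ⟨fun i => Nat.casesOn i A A', fun i => Nat.casesOn i B B',
      fun i => Nat.casesOn i a a', fun i => Nat.casesOn i b b', ?_, rfl, hk, ?_⟩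
    · rintro (_ | i) hi
      · simpa [h0] using s
      · exact h i (by omega)
    · rw [Finset.prod_range_succ', mul_comm, hc]
      rfl

/-- The combinatorial induction. -/
lemma cyc_induct
    (hrel : ∀ A ∈ F, ∀ B ∈ F, A ≤ B → ∃ w, Rel U A B w)
    (P Q : Submodule ℂ H → Submodule ℂ H → Prop)
    (hP : ∀ A ∈ F, ∀ B ∈ F, ¬ P A B → ∃ N ∈ F, N ≤ A ∧ N ≤ B)
    (hQ : ∀ A ∈ F, ∀ B ∈ F, ¬ Q A B → ∃ N ∈ F, A ≤ N ∧ B ≤ N)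
    (hmain : ∀ (m : ℕ) (A B : ℕ → Submodule ℂ H) (a b : ℕ → ℂ),
      (∀ i < m + 1, Stp F U (A i) (B i) (A (i + 1)) (a i) (b i)) → A (m + 1) = A 0 →
      (∀ i j, i < j → j < m + 1 → P (A i) (A j)) →
      (∀ i j, i < j → j < m + 1 → Q (B i) (B j)) →
      ∏ i ∈ Finset.range (m + 1), a i / b i = 1)
    (m : ℕ) : ∀ (X : Submodule ℂ H) (c : ℂ), Zig F U m X X c → c = 1 := by
  induction m using Nat.strong_induction_on with
  | _ m ih =>
  intro X c hz
  obtain ⟨A, B, a, b, h, h0, hm, hc⟩ := hz.exists_fun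
  rcases m with _ | m
  · simpa using hc
  by_cases h1 : ∀ i j, i < j → j < m + 1 → P (A i) (A j)
  swap
  · push Not at h1
    obtain ⟨i, j, hij, hj, hp⟩ := h1
    obtain ⟨N, hN, hNi, hNj⟩ := hP _ (h i (by omega)).hA _ (h j hj).hA hp
    obtain ⟨w, hw⟩ := hrel _ hN _ (h i (by omega)).hA hNi
    obtain ⟨v, hv⟩ := hrel _ hN _ (h j (by omega)).hA hNj
    obtain ⟨d, rfl⟩ := Nat.exists_eq_add_of_lt hij
    obtain ⟨e, he⟩ := Nat.exists_eq_add_of_lt hj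
    have s1 := seg i A B a b fun l hl => h l (by omega)
    have s2 := seg (d + 1) (fun l => A (i + l)) (fun l => B (i + l)) (fun l => a (i + l))
      (fun l => b (i + l)) fun l hl => h (i + l) (by omega)
    have s3 := seg (e + 1) (fun l => A (i + d + 1 + l)) (fun l => B (i + d + 1 + l))
      (fun l => a (i + d + 1 + l))
      (fun l => b (i + d + 1 + l)) fun l hl => h (i + d + 1 + l) (by omega)
    have hcc : c = (∏ l ∈ Finset.range i, a l / b l) *
      (∏ l ∈ Finset.range (d + 1), a (i + l) / b (i + l)) *
      ∏ l ∈ Finset.range (e + 1), a (i + d + 1 + l) / b (i + d + 1 + l) := by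
      rw [hc, ← Finset.prod_range_add, show m + 1 = (i + (d + 1)) + (e + 1) by omega,
        Finset.prod_range_add _ (i + (d + 1))]
      rfl
    have e3 : A (i + d + 1 + (e + 1)) = A 0 := by rw [h0, ← hm, he]; rfl
    simp only [e3] at s3
    have i1 := ih (d + 1) (by omega) N _
      ((s2.shrinkL (by omega) hN hw).shrinkR (by omega) hN hv)
    have i2 := ih _ (by omega) N _
      (((s3.trans s1).shrinkL (by omega) hN hv).shrinkR (by omega) hN hw)
    rw [hcc]
    have := hw.1
    have := hv.1
    field_simp at i1 i2
    have h3 : w * v * ((∏ l ∈ Finset.range i, a l / b l) *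
      (∏ l ∈ Finset.range (d + 1), a (i + l) / b (i + l)) *
      ∏ l ∈ Finset.range (e + 1), a (i + d + 1 + l) / b (i + d + 1 + l)) = w * v * 1 := by
      linear_combination v * ((∏ l ∈ Finset.range i, a l / b l) *
        ∏ l ∈ Finset.range (e + 1), a (i + d + 1 + l) / b (i + d + 1 + l)) * i1 + v * i2
    exact mul_left_cancel₀ (mul_ne_zero hw.1 hv.1) h3
  by_cases h2 : ∀ i j, i < j → j < m + 1 → Q (B i) (B j)
  swap
  · push Not at h2
    obtain ⟨i, j, hij, hj, hp⟩ := h2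
    obtain ⟨N, hN, hNi, hNj⟩ := hQ _ (h i (by omega)).hB _ (h j hj).hB hp
    obtain ⟨w, hw⟩ := hrel _ (h i (by omega)).hB _ hN hNi
    obtain ⟨v, hv⟩ := hrel _ (h j (by omega)).hB _ hN hNj
    obtain ⟨d, rfl⟩ := Nat.exists_eq_add_of_lt hij
    obtain ⟨e, he⟩ := Nat.exists_eq_add_of_lt hj
    have s1 := seg i A B a b fun l hl => h l (by omega)
    have s2 := seg d (fun l => A (i + 1 + l)) (fun l => B (i + 1 + l)) (fun l => a (i + 1 + l))
      (fun l => b (i + 1 + l)) fun l hl => h (i + 1 + l) (by omega)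
    have s3 := seg e (fun l => A (i + d + 2 + l)) (fun l => B (i + d + 2 + l))
      (fun l => a (i + d + 2 + l))
      (fun l => b (i + d + 2 + l)) fun l hl => h (i + d + 2 + l) (by omega)
    have hcc : c = (∏ l ∈ Finset.range i, a l / b l) * (a i / b i) *
      (∏ l ∈ Finset.range d, a (i + 1 + l) / b (i + 1 + l)) *
      (a (i + d + 1) / b (i + d + 1)) *
      ∏ l ∈ Finset.range e, a (i + d + 2 + l) / b (i + d + 2 + l) := by
      rw [hc, ← Finset.prod_range_succ, ← Finset.prod_range_add,
        show i + d + 1 = i + 1 + d by omega, ← Finset.prod_range_succ,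
        show m + 1 = (i + 1 + d + 1) + e by omega,
        Finset.prod_range_add _ (i + 1 + d + 1), show i + d + 2 = i + 1 + d + 1 by omega]
    have e3 : A (i + d + 2 + e) = A 0 := by
      rw [h0, ← hm, he]; congr 1; omega
    have e2 : A (i + 1 + d) = A (i + d + 1) := by congr 1; omega
    simp only [e3, add_zero] at s3
    simp only [e2, add_zero] at s2
    have t1 := h i (by omega)
    have t2 := h (i + d + 1) (by omega)
    have u1 : Stp F U (A (i + d + 1)) N (A (i + 1)) _ _ :=
      ⟨t2.hA, hN, t1.hC, t2.ra.trans hv, t1.rb.trans hw⟩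
    have u2 : Stp F U (A i) N (A (i + d + 2)) _ _ :=
      ⟨t1.hA, hN, t2.hC, t1.ra.trans hw, t2.rb.trans hv⟩
    have i1 := ih _ (by omega) _ _ (s2.trans u1.zig)
    have i2 := ih _ (by omega) _ _ ((s1.trans u2.zig).trans s3)
    rw [hcc]
    have h3 := congrArg₂ (· * ·) i1 i2
    simp only [mul_one] at h3
    rw [← h3]
    have := hw.1
    have := hv.1
    have := t1.ra.1
    have := t1.rb.1
    have := t2.ra.1
    have := t2.rb.1
    field_simp
  · rw [hc]
    exact hmain m A B a b h (hm.trans h0.symm) h1 h2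

/-! Hilbert space part. -/

lemma le_closedJoin {S : Set (Submodule ℂ H)} {E : Submodule ℂ H} (h : E ∈ S) :
    E ≤ closedJoin S :=
  (le_sSup h).trans (Submodule.le_topologicalClosure _)

lemma closedJoin_le {S : Set (Submodule ℂ H)} {G : Submodule ℂ H} (hG : IsClosed (G : Set H))
    (h : ∀ E ∈ S, E ≤ G) : closedJoin S ≤ G :=
  Submodule.topologicalClosure_minimal _ (sSup_le h) hG

lemma minus_mem {L : Set (Submodule ℂ H)} (hL : IsSubspaceLattice L) (N : Submodule ℂ H) :
    minus L N ∈ L := hL.join_mem _ fun _ h => h.1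

lemma minus_mono {L : Set (Submodule ℂ H)} {M N : Submodule ℂ H} (h : M ≤ N) :
    minus L M ≤ minus L N :=
  Submodule.topologicalClosure_mono (sSup_le_sSup fun _ hE => ⟨hE.1, fun h' => hE.2 (h.trans h')⟩)

lemma rankOne_apply (x f h : H) : rankOne x f h = inner ℂ f h • x := rfl

lemma rankOne_mem {L : Set (Submodule ℂ H)} {N : Submodule ℂ H} {x f : H} (hx : x ∈ N)
    (hf : f ∈ (minus L N)ᗮ) : rankOne x f ∈ algL L := by
  intro E hE h hh
  rw [rankOne_apply]
  by_cases hN : N ≤ E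
  · exact E.smul_mem _ (hN hx)
  · have : h ∈ minus L N := le_closedJoin (S := {E | E ∈ L ∧ ¬ N ≤ E}) ⟨hE, hN⟩ hh
    rw [(Submodule.mem_orthogonal' _ _).1 hf h this, zero_smul]
    exact E.zero_mem

lemma opRank_le_of_range_le {T : H →L[ℂ] H} {S : Finset H}
    (h : ∀ x, T x ∈ Submodule.span ℂ (S : Set H)) : opRank T ≤ S.card := by
  have h1 : LinearMap.range (T : H →ₗ[ℂ] H) ≤ Submodule.span ℂ (S : Set H) := by
    rintro _ ⟨x, rfl⟩; exact h x
  exact (Submodule.rank_mono h1).trans (rank_span_finset_le S)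

lemma eq_zero_of_map {L : Set (Submodule ℂ H)} {Φ : (H →L[ℂ] H) → (H →L[ℂ] H)}
    (hrank : RankPreserving L Φ) {x f : H} (hA : rankOne x f ∈ algL L)
    (h0 : Φ (rankOne x f) = 0) : x = 0 ∨ f = 0 := by
  have h1 : opRank (rankOne x f) ≤ ({x} : Finset H).card :=
    opRank_le_of_range_le fun y => by
      rw [rankOne_apply]
      exact Submodule.smul_mem _ _ (Submodule.subset_span (by simp))
  have h2 := hrank _ hA (h1.trans_lt (Cardinal.natCast_lt_aleph0))
  rw [h0] at h2
  have h3 : opRank (0 : H →L[ℂ] H) = 0 := by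
    have := opRank_le_of_range_le (T := (0 : H →L[ℂ] H)) (S := ∅) (by simp)
    simpa using this
  rw [h3] at h2
  unfold opRank at h2
  rw [eq_comm, Submodule.rank_eq_zero] at h2
  by_contra! hc
  have h4 : rankOne x f f ∈ LinearMap.range ((rankOne x f : H →L[ℂ] H) : H →ₗ[ℂ] H) := ⟨f, rfl⟩
  rw [h2, Submodule.mem_bot, rankOne_apply, smul_eq_zero, inner_self_eq_zero] at h4
  tauto

variable [CompleteSpace H]

lemma projOf_spec {E : Submodule ℂ H} (hE : IsClosed (E : Set H)) (x : H) :
    projOf E x ∈ E ∧ x - projOf E x ∈ Eᗮ := by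
  haveI : CompleteSpace E := hE.completeSpace_coe
  unfold projOf
  rw [dif_pos hE]
  exact ⟨Submodule.coe_mem _, Submodule.sub_starProjection_mem_orthogonal x⟩

lemma projOf_of_mem {E : Submodule ℂ H} (hE : IsClosed (E : Set H)) {x : H} (hx : x ∈ E) :
    projOf E x = x := by
  obtain ⟨h1, h2⟩ := projOf_spec hE x
  have h3 := (Submodule.mem_orthogonal _ _).1 h2 _ (E.sub_mem hx h1)
  rw [inner_self_eq_zero] at h3
  exact (sub_eq_zero.1 h3).symm

lemma projOf_of_mem_orth {E : Submodule ℂ H} (hE : IsClosed (E : Set H)) {x : H} (hx : x ∈ Eᗮ) :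
    projOf E x = 0 := by
  obtain ⟨h1, h2⟩ := projOf_spec hE x
  have h3 := (Submodule.mem_orthogonal _ _).1 (Eᗮ.sub_mem hx h2) _ h1
  rw [sub_sub_cancel, inner_self_eq_zero] at h3
  exact h3

lemma orth_inter {L : Set (Submodule ℂ H)} (hL : IsCSL L) {E G : Submodule ℂ H} (hE : E ∈ L)
    (hG : G ∈ L) (h : E ⊓ G = ⊥) {x y : H} (hx : x ∈ E) (hy : y ∈ G) : inner ℂ x y = 0 := by
  have cE := hL.isClosed E hE
  have cG := hL.isClosed G hG
  have hc := congrArg (fun T => T y) (hL.commutes E hE G hG)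
  simp only [ContinuousLinearMap.mul_apply, projOf_of_mem cG hy] at hc
  have h1 : projOf E y ∈ E ⊓ G := ⟨(projOf_spec cE y).1, hc ▸ (projOf_spec cG _).1⟩
  rw [h, Submodule.mem_bot] at h1
  have h2 := (projOf_spec cE y).2
  rw [h1, sub_zero] at h2
  exact (Submodule.mem_orthogonal _ _).1 h2 x hx

lemma orth_inter' {L : Set (Submodule ℂ H)} (hL : IsCSL L) {E G : Submodule ℂ H} (hE : E ∈ L)
    (hG : G ∈ L) (h : Eᗮ ⊓ Gᗮ = ⊥) {x y : H} (hx : x ∈ Eᗮ) (hy : y ∈ Gᗮ) :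
    inner ℂ x y = 0 := by
  have cE := hL.isClosed E hE
  have cG := hL.isClosed G hG
  have hc := congrArg (fun T => T y) (hL.commutes E hE G hG)
  simp only [ContinuousLinearMap.mul_apply, projOf_of_mem_orth cG hy, map_zero] at hc
  have h0 : projOf E y ∈ Gᗮ := by
    have := (projOf_spec cG (projOf E y)).2
    rwa [← hc, sub_zero] at this
  have h1 : y - projOf E y ∈ Eᗮ ⊓ Gᗮ := ⟨(projOf_spec cE y).2, Gᗮ.sub_mem hy h0⟩
  rw [h, Submodule.mem_bot, sub_eq_zero] at h1
  have h2 := (projOf_spec cE y).1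
  rw [← h1] at h2
  exact (Submodule.mem_orthogonal' _ _).1 hx y h2

lemma minus_orth_ne {L : Set (Submodule ℂ H)} (hL : IsSubspaceLattice L) {N : Submodule ℂ H}
    (h : N ∈ famF L) : (minus L N)ᗮ ≠ ⊥ := by
  haveI : CompleteSpace (minus L N) := (hL.isClosed _ (minus_mem hL N)).completeSpace_coe
  intro h'
  exact h.2.2 ((Submodule.orthogonal_eq_bot_iff).1 h')

lemma exists_inf {L : Set (Submodule ℂ H)} (hL : IsSubspaceLattice L) {A B : Submodule ℂ H}
    (hA : A ∈ famF L) (hB : B ∈ famF L) (h : ¬ A ⊓ B = ⊥) :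
    ∃ N ∈ famF L, N ≤ A ∧ N ≤ B := by
  refine ⟨A ⊓ B, ⟨?_, h, fun h' => hA.2.2 ?_⟩, inf_le_left, inf_le_right⟩
  · rw [← sInf_pair]
    apply hL.sInf_mem
    rintro E (rfl | rfl)
    exacts [hA.1, hB.1]
  · exact top_le_iff.1 (h' ▸ minus_mono inf_le_left)

lemma exists_sup {L : Set (Submodule ℂ H)} (hL : IsSubspaceLattice L) {A B : Submodule ℂ H}
    (hA : A ∈ famF L) (hB : B ∈ famF L) (h : ¬ (minus L A)ᗮ ⊓ (minus L B)ᗮ = ⊥) :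
    ∃ N ∈ famF L, A ≤ N ∧ B ≤ N := by
  have hAN : A ≤ closedJoin {A, B} := le_closedJoin (by simp)
  have hBN : B ≤ closedJoin {A, B} := le_closedJoin (by simp)
  refine ⟨closedJoin {A, B}, ⟨?_, fun h' => hA.2.1 (le_bot_iff.1 (h' ▸ hAN)), fun h' => h ?_⟩,
    hAN, hBN⟩
  · apply hL.join_mem
    rintro E (rfl | rfl)
    exacts [hA.1, hB.1]
  · rw [eq_bot_iff]
    rintro g ⟨hg1, hg2⟩
    have : minus L (closedJoin {A, B}) ≤ (Submodule.span ℂ {g})ᗮ := by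
      apply closedJoin_le (Submodule.isClosed_orthogonal _)
      rintro E ⟨hE, hN⟩ e he
      rw [Submodule.mem_orthogonal_singleton_iff_inner_right]
      have : ¬ A ≤ E ∨ ¬ B ≤ E := by
        by_contra! hc
        apply hN
        apply closedJoin_le (hL.isClosed _ hE)
        rintro E (rfl | rfl)
        exacts [hc.1, hc.2]
      rcases this with hc | hc
      · exact (Submodule.mem_orthogonal' _ _).1 hg1 e
          (le_closedJoin (S := {E | E ∈ L ∧ ¬ A ≤ E}) ⟨hE, hc⟩ he)
      · exact (Submodule.mem_orthogonal' _ _).1 hg2 e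
          (le_closedJoin (S := {E | E ∈ L ∧ ¬ B ≤ E}) ⟨hE, hc⟩ he)
    rw [h'] at this
    have h2 := this (Submodule.mem_top (x := g))
    rw [Submodule.mem_orthogonal_singleton_iff_inner_right, inner_self_eq_zero] at h2
    exact h2

lemma exists_rel {L : Set (Submodule ℂ H)} (hL : IsSubspaceLattice L)
    {Φ : (H →L[ℂ] H) → (H →L[ℂ] H)}
    (hrank : RankPreserving L Φ)
    (U : (N : Submodule ℂ H) → (N →ₗ[ℂ] H))
    (V : (N : Submodule ℂ H) → ((((minus L N)ᗮ : Submodule ℂ H)) →ₗ[ℂ] H))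
    (hUV : ∀ N ∈ famF L, ∀ (x : N) (f : ((minus L N)ᗮ : Submodule ℂ H)),
      Φ (rankOne (x : H) (f : H)) = rankOne (U N x) (V N f))
    (A : Submodule ℂ H) (hA : A ∈ famF L) (B : Submodule ℂ H) (hB : B ∈ famF L) (hAB : A ≤ B) :
    ∃ w, Rel U A B w := by
  obtain ⟨f, hf, hf0⟩ := Submodule.exists_mem_ne_zero_of_ne_bot (minus_orth_ne hL hB)
  obtain ⟨x, hx, hx0⟩ := Submodule.exists_mem_ne_zero_of_ne_bot hA.2.1
  have hf' : f ∈ (minus L A)ᗮ := Submodule.orthogonal_le (minus_mono hAB) hf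
  have hne : rankOne (U A ⟨x, hx⟩) (V A ⟨f, hf'⟩) ≠ 0 := by
    rw [← hUV A hA ⟨x, hx⟩ ⟨f, hf'⟩]
    intro h0
    rcases eq_zero_of_map hrank (rankOne_mem hx hf') h0 with h | h
    exacts [hx0 h, hf0 h]
  have hv : V A ⟨f, hf'⟩ ≠ 0 := by
    intro h; apply hne; ext y; simp [h, rankOne_apply]
  have hu : U A ⟨x, hx⟩ ≠ 0 := by
    intro h; apply hne; ext y; simp [h, rankOne_apply]
  have key : ∀ (y : H) (h1 : y ∈ A) (h2 : y ∈ B), U A ⟨y, h1⟩ =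
      (inner ℂ (V B ⟨f, hf⟩) (V A ⟨f, hf'⟩) / inner ℂ (V A ⟨f, hf'⟩) (V A ⟨f, hf'⟩) : ℂ) •
        U B ⟨y, h2⟩ := by
    intro y h1 h2
    have e := (hUV A hA ⟨y, h1⟩ ⟨f, hf'⟩).symm.trans (hUV B hB ⟨y, h2⟩ ⟨f, hf⟩)
    have e2 := congrArg (fun T => T (V A ⟨f, hf'⟩)) e
    simp only [rankOne_apply] at e2
    have h3 : (inner ℂ (V A ⟨f, hf'⟩) (V A ⟨f, hf'⟩) : ℂ) ≠ 0 := by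
      rwa [Ne, inner_self_eq_zero]
    rw [div_eq_inv_mul, mul_smul, ← e2, smul_smul, inv_mul_cancel₀ h3, one_smul]
  refine ⟨_, ?_, hAB, key⟩
  intro h0
  have := key x hx (hAB hx)
  rw [h0, zero_smul] at this
  exact hu this

/-- Scalar bookkeeping for the cyclic linear system. -/
lemma scalar_cycle (m : ℕ) (t a b : ℕ → ℂ) (ha : ∀ i < m + 1, a i ≠ 0)
    (hb : ∀ i < m + 1, b i ≠ 0) (h0 : t 0 * a 0 = t m * b m)
    (hs : ∀ i < m, t (i + 1) * a (i + 1) = t i * b i) (hne : ∃ i < m + 1, t i ≠ 0) :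
    ∏ i ∈ Finset.range (m + 1), a i / b i = 1 := by
  have h1 : ∀ j ≤ m, t j * a j * ∏ i ∈ Finset.range j, a i / b i = t 0 * a 0 := by
    intro j
    induction j with
    | zero => simp
    | succ j ih =>
      intro hj
      rw [Finset.prod_range_succ, hs j (by omega), ← ih (by omega)]
      have := hb j (by omega)
      field_simp
  have h2 : t m ≠ 0 := by
    intro hm
    obtain ⟨i, hi, hti⟩ := hne
    apply hti
    clear hti
    induction i with
    | zero =>
      rw [hm, zero_mul] at h0
      exact (mul_eq_zero.1 h0).resolve_right (ha 0 hi)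
    | succ i ih =>
      have := hs i (by omega)
      rw [ih (by omega), zero_mul] at this
      exact (mul_eq_zero.1 this).resolve_right (ha _ hi)
  have h3 := h1 m le_rfl
  rw [h0] at h3
  have hbm := hb m (by omega)
  rw [Finset.prod_range_succ]
  apply mul_left_cancel₀ (mul_ne_zero h2 hbm)
  have e4 : t m * b m * ((∏ i ∈ Finset.range m, a i / b i) * (a m / b m)) =
      t m * a m * (∏ i ∈ Finset.range m, a i / b i) := by
    field_simp
  rw [e4, h3, mul_one]

lemma sum_mem_algL {L : Set (Submodule ℂ H)} {T : ℕ → H →L[ℂ] H} (k : ℕ)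
    (h : ∀ i < k, T i ∈ algL L) : ∑ i ∈ Finset.range k, T i ∈ algL L := by
  intro E hE x hx
  rw [ContinuousLinearMap.sum_apply]
  exact E.sum_mem fun i hi => h i (Finset.mem_range.1 hi) E hE x hx

lemma map_sum_alg {L : Set (Submodule ℂ H)} {Φ : (H →L[ℂ] H) → (H →L[ℂ] H)}
    (hlin : IsLinearOnAlg L Φ) {T : ℕ → H →L[ℂ] H} (k : ℕ)
    (h : ∀ i < k, T i ∈ algL L) :
    Φ (∑ i ∈ Finset.range k, T i) = ∑ i ∈ Finset.range k, Φ (T i) := by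
  induction k with
  | zero =>
    have := hlin.map_smul 0 0 (fun E hE x hx => by simp)
    simpa using this
  | succ k ih =>
    rw [Finset.sum_range_succ, Finset.sum_range_succ, hlin.map_add _ (sum_mem_algL k fun i hi => h i (by omega)) _ (h k (by omega)), ih fun i hi => h i (by omega)]

lemma main_case {L : Set (Submodule ℂ H)} (hL : IsCSL L)
    {Φ : (H →L[ℂ] H) → (H →L[ℂ] H)} (hlin : IsLinearOnAlg L Φ)
    (hrank : RankPreserving L Φ)
    (U : (N : Submodule ℂ H) → (N →ₗ[ℂ] H))
    (V : (N : Submodule ℂ H) → ((((minus L N)ᗮ : Submodule ℂ H)) →ₗ[ℂ] H))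
    (hUV : ∀ N ∈ famF L, ∀ (x : N) (f : ((minus L N)ᗮ : Submodule ℂ H)),
      Φ (rankOne (x : H) (f : H)) = rankOne (U N x) (V N f))
    (m : ℕ) (A B : ℕ → Submodule ℂ H) (a b : ℕ → ℂ)
    (h : ∀ i < m + 1, Stp (famF L) U (A i) (B i) (A (i + 1)) (a i) (b i))
    (hcyc : A (m + 1) = A 0)
    (hP : ∀ i j, i < j → j < m + 1 → A i ⊓ A j = ⊥)
    (hQ : ∀ i j, i < j → j < m + 1 → (minus L (B i))ᗮ ⊓ (minus L (B j))ᗮ = ⊥) :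
    ∏ i ∈ Finset.range (m + 1), a i / b i = 1 := by
  classical
  have ey : ∀ N : Submodule ℂ H, ∃ y : N, N ≠ ⊥ → (y : H) ≠ 0 := by
    intro N
    by_cases hN : N = ⊥
    · exact ⟨0, fun h => absurd hN h⟩
    · obtain ⟨x, hx, hx0⟩ := Submodule.exists_mem_ne_zero_of_ne_bot hN
      exact ⟨⟨x, hx⟩, fun _ => hx0⟩
  choose y hy using ey
  set x : ℕ → H := fun i => (y (A i) : H) with hx
  set f : ℕ → H := fun i => (y ((minus L (B i))ᗮ) : H) with hf
  set u : ℕ → H := fun i => U (A i) (y (A i)) with hu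
  set v : ℕ → H := fun i => V (B i) (y ((minus L (B i))ᗮ)) with hv
  have hxc : x (m + 1) = x 0 := by simp only [hx]; rw [hcyc]
  have huc : u (m + 1) = u 0 := by simp only [hu]; rw [hcyc]
  have hx0 : ∀ i < m + 1, x i ≠ 0 := fun i hi => hy _ (h i hi).hA.2.1
  have hf0 : ∀ i < m + 1, f i ≠ 0 := fun i hi =>
    hy _ (minus_orth_ne hL.toIsSubspaceLattice (h i hi).hB)
  have hxo : ∀ i < m + 1, ∀ j < m + 1, i ≠ j → inner ℂ (x i) (x j) = 0 := by
    intro i hi j hj hij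
    rcases lt_or_gt_of_ne hij with hlt | hlt
    · exact orth_inter hL (h i hi).hA.1 (h j hj).hA.1 (hP i j hlt hj) (y _).2 (y _).2
    · exact orth_inter hL (h i hi).hA.1 (h j hj).hA.1 (by rw [inf_comm]; exact hP j i hlt hi)
        (y _).2 (y _).2
  have hfo : ∀ i < m + 1, ∀ j < m + 1, i ≠ j → inner ℂ (f i) (f j) = 0 := by
    intro i hi j hj hij
    have mi := minus_mem hL.toIsSubspaceLattice (B i)
    have mj := minus_mem hL.toIsSubspaceLattice (B j)
    rcases lt_or_gt_of_ne hij with hlt | hlt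
    · exact orth_inter' hL mi mj (hQ i j hlt hj) (y _).2 (y _).2
    · exact orth_inter' hL mi mj (by rw [inf_comm]; exact hQ j i hlt hi) (y _).2 (y _).2
  set z : ℕ → H := fun i => a i • x i - b i • x (i + 1) with hz
  have hzB : ∀ i < m + 1, z i ∈ B i := fun i hi =>
    (B i).sub_mem ((B i).smul_mem _ ((h i hi).ra.2.1 (y _).2))
      ((B i).smul_mem _ ((h i hi).rb.2.1 (y _).2))
  have hfB : ∀ i, f i ∈ (minus L (B i))ᗮ := fun i => (y _).2
  have hTalg : ∀ i < m + 1, rankOne (z i) (f i) ∈ algL L := fun i hi =>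
    rankOne_mem (hzB i hi) (hfB i)
  have hΦ : ∀ i < m + 1, Φ (rankOne (z i) (f i)) = rankOne (u i - u (i + 1)) (v i) := by
    intro i hi
    have s := h i hi
    have e := hUV (B i) s.hB ⟨z i, hzB i hi⟩ ⟨f i, hfB i⟩
    have e2 : U (B i) ⟨z i, hzB i hi⟩ = u i - u (i + 1) := by
      have h1 := s.ra.2.2 (x i) (y (A i)).2 (s.ra.2.1 (y _).2)
      have h2 := s.rb.2.2 (x (i + 1)) (y (A (i + 1))).2 (s.rb.2.1 (y _).2)
      have h3 : (⟨z i, hzB i hi⟩ : B i) = a i • ⟨x i, s.ra.2.1 (y _).2⟩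
        - b i • ⟨x (i + 1), s.rb.2.1 (y _).2⟩ := rfl
      rw [h3, map_sub, map_smul, map_smul, ← h1, ← h2]
    rw [e2] at e
    exact e
  set T := ∑ i ∈ Finset.range (m + 1), rankOne (z i) (f i) with hT
  have hTm : T ∈ algL L := sum_mem_algL _ hTalg
  have hΦT : Φ T = ∑ i ∈ Finset.range (m + 1), rankOne (u i - u (i + 1)) (v i) := by
    rw [hT, map_sum_alg hlin _ hTalg]
    exact Finset.sum_congr rfl fun i hi => hΦ i (Finset.mem_range.1 hi)
  have hr1 : opRank T ≤ ((Finset.range (m + 1)).image z).card := by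
    apply opRank_le_of_range_le
    intro w
    rw [hT, ContinuousLinearMap.sum_apply]
    refine Submodule.sum_mem _ fun i hi => Submodule.smul_mem _ _ (Submodule.subset_span ?_)
    exact Finset.mem_coe.2 (Finset.mem_image_of_mem _ hi)
  have hr2 : opRank (Φ T) ≤ (m : Cardinal) := by
    have : opRank (Φ T) ≤ ((Finset.range m).image fun i => u (i + 1) - u 0).card := by
      apply opRank_le_of_range_le
      intro w
      have hmem : ∀ i ≤ m + 1, u i - u 0 ∈ Submodule.span ℂ
          (((Finset.range m).image fun i => u (i + 1) - u 0 : Finset H) : Set H) := by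
        intro i hi
        rcases i with _ | i
        · simp
        · by_cases him : i = m
          · subst him; simp [huc]
          · refine Submodule.subset_span (Finset.mem_coe.2 (Finset.mem_image.2 ⟨i, ?_, rfl⟩))
            rw [Finset.mem_range]; omega
      rw [hΦT, ContinuousLinearMap.sum_apply]
      refine Submodule.sum_mem _ fun i hi => Submodule.smul_mem _ _ ?_
      have hi := Finset.mem_range.1 hi
      have := Submodule.sub_mem _ (hmem i (by omega)) (hmem (i + 1) (by omega))
      simpa using this
    refine this.trans ?_
    have := Finset.card_image_le (s := Finset.range m) (f := fun i => u (i + 1) - u 0)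
    rw [Finset.card_range] at this
    exact_mod_cast this
  have hr3 := hrank T hTm (hr1.trans_lt Cardinal.natCast_lt_aleph0)
  rw [hr3] at hr2
  -- `z i` lies in the range of `T`
  have hzr : ∀ i < m + 1, z i ∈ LinearMap.range (T : H →ₗ[ℂ] H) := by
    intro i hi
    refine ⟨(inner ℂ (f i) (f i) : ℂ)⁻¹ • f i, ?_⟩
    have hne : (inner ℂ (f i) (f i) : ℂ) ≠ 0 := by
      rw [Ne, inner_self_eq_zero]; exact hf0 i hi
    rw [map_smul, ContinuousLinearMap.coe_coe, hT, ContinuousLinearMap.sum_apply,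
      Finset.sum_eq_single i, rankOne_apply, smul_smul, inv_mul_cancel₀ hne, one_smul]
    · intro j hj hji
      rw [rankOne_apply, hfo j (Finset.mem_range.1 hj) i hi hji, zero_smul]
    · intro hni; exact absurd (Finset.mem_range.2 hi) hni
  have hdep : ¬ LinearIndependent ℂ
      (fun i : Fin (m + 1) => (⟨z i, hzr i i.2⟩ : LinearMap.range (T : H →ₗ[ℂ] H))) := by
    intro hli
    have := hli.cardinal_lift_le_rank
    simp only [Cardinal.mk_fin, Cardinal.lift_natCast] at this
    rw [Cardinal.lift_uzero] at this
    have h4 := Nat.cast_le.1 (this.trans hr2)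
    omega
  rw [Fintype.not_linearIndependent_iff] at hdep
  obtain ⟨g, hg, i0, hi0⟩ := hdep
  have hg2 := congrArg (Subtype.val) hg
  simp only [Submodule.coe_sum, Submodule.coe_smul, ZeroMemClass.coe_zero] at hg2
  set t : ℕ → ℂ := fun i => if hi : i < m + 1 then g ⟨i, hi⟩ else 0 with ht
  have hg3 : ∑ i ∈ Finset.range (m + 1), t i • z i = 0 := by
    rw [Finset.sum_range, ← hg2]
    refine Finset.sum_congr rfl fun i _ => ?_
    simp only [ht]
    rw [dif_pos i.2]
  set c : ℕ → ℂ := fun i => Nat.casesOn i (t 0 * a 0 - t m * b m)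
    (fun i => t (i + 1) * a (i + 1) - t i * b i) with hc
  have hsum : ∑ i ∈ Finset.range (m + 1), c i • x i = 0 := by
    rw [← hg3]
    simp only [hz, smul_sub, smul_smul, Finset.sum_sub_distrib]
    rw [Finset.sum_range_succ', Finset.sum_range_succ' (fun i => (t i * a i) • x i),
      Finset.sum_range_succ (fun i => (t i * b i) • x (i + 1)), hxc]
    have e0 : c 0 = t 0 * a 0 - t m * b m := rfl
    have e1 : ∀ i, c (i + 1) = t (i + 1) * a (i + 1) - t i * b i := fun _ => rfl
    simp only [e0, e1, sub_smul, Finset.sum_sub_distrib]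
    abel
  have hc0 : ∀ i < m + 1, c i = 0 := by
    intro i hi
    have e := congrArg (fun w => (inner ℂ (x i) w : ℂ)) hsum
    simp only [inner_sum, inner_zero_right, inner_smul_right] at e
    rw [Finset.sum_eq_single i] at e
    · refine (mul_eq_zero.1 e).resolve_right ?_
      rw [inner_self_eq_zero]; exact hx0 i hi
    · intro j hj hji
      rw [hxo i hi j (Finset.mem_range.1 hj) hji.symm, mul_zero]
    · intro hni; exact absurd (Finset.mem_range.2 hi) hni
  refine scalar_cycle m t a b (fun i hi => (h i hi).ra.1) (fun i hi => (h i hi).rb.1)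
    (sub_eq_zero.1 (hc0 0 (by omega))) (fun i hi => sub_eq_zero.1 (hc0 (i + 1) (by omega)))
    ⟨i0, i0.2, ?_⟩
  simp only [ht]
  rw [dif_pos i0.2]
  exact hi0

lemma zig_of_fin (n : ℕ) (M : Fin (n + 1) → Submodule ℂ H) (lam : Fin n → ℂ)
    (h : ∀ k : Fin n, ∃ B a b, Stp F U (M k.castSucc) B (M k.succ) a b ∧ lam k = a / b) :
    Zig F U n (M 0) (M (Fin.last n)) (∏ k, lam k) := by
  induction n with
  | zero => simpa using Zig.nil (M 0)
  | succ n ih =>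
    obtain ⟨B, a, b, s, e⟩ := h 0
    rw [Fin.prod_univ_succ, e]
    exact Zig.cons s (ih (fun k => M k.succ) (fun k => lam k.succ) fun k => h k.succ)

end CSLCycle

theorem stmt_10 {H : Type*} [NormedAddCommGroup H] [InnerProductSpace ℂ H]
    [CompleteSpace H] [TopologicalSpace.SeparableSpace H]
    (L : Set (Submodule ℂ H)) (hL : IsCSL L) (hcd : IsCompletelyDistributive L)
    (Φ : (H →L[ℂ] H) → (H →L[ℂ] H)) (hlin : IsLinearOnAlg L Φ)
    (hrank : RankPreserving L Φ)
    (hcons : ∀ N ∈ famF L, Consistent L Φ N)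
    (U : (N : Submodule ℂ H) → (N →ₗ[ℂ] H))
    (V : (N : Submodule ℂ H) → ((((minus L N)ᗮ : Submodule ℂ H)) →ₗ[ℂ] H))
    (hUV : ∀ N ∈ famF L, ∀ (x : N) (f : ((minus L N)ᗮ : Submodule ℂ H)),
      Φ (rankOne (x : H) (f : H)) = rankOne (U N x) (V N f))
    (n : ℕ) (M : Fin (n + 1) → Submodule ℂ H)
    (hM : ∀ k, M k ∈ famF L) (hcycle : M (Fin.last n) = M 0)
    (hcomp : ∀ k : Fin n, Comparable' (M k.castSucc) (M k.succ))
    (lam : Fin n → ℂ) (hlam : ∀ k, lam k ≠ 0)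
    (hUp : ∀ k : Fin n, M k.castSucc ≤ M k.succ →
      (∀ (x : H) (h1 : x ∈ M k.castSucc) (h2 : x ∈ M k.succ),
        U (M k.castSucc) ⟨x, h1⟩ = lam k • U (M k.succ) ⟨x, h2⟩) ∧
      (∀ (f : H) (h1 : f ∈ (minus L (M k.succ))ᗮ) (h2 : f ∈ (minus L (M k.castSucc))ᗮ),
        V (M k.succ) ⟨f, h1⟩ = (starRingEnd ℂ) (lam k) • V (M k.castSucc) ⟨f, h2⟩))
    (hDown : ∀ k : Fin n, M k.succ ≤ M k.castSucc →
      (∀ (x : H) (h1 : x ∈ M k.succ) (h2 : x ∈ M k.castSucc),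
        U (M k.succ) ⟨x, h1⟩ = (lam k)⁻¹ • U (M k.castSucc) ⟨x, h2⟩) ∧
      (∀ (f : H) (h1 : f ∈ (minus L (M k.castSucc))ᗮ) (h2 : f ∈ (minus L (M k.succ))ᗮ),
        V (M k.castSucc) ⟨f, h1⟩ = (starRingEnd ℂ) ((lam k)⁻¹) • V (M k.succ) ⟨f, h2⟩)) :
    ∏ k, lam k = 1 := by
  have hz : CSLCycle.Zig (famF L) U n (M 0) (M (Fin.last n)) (∏ k, lam k) := by
    apply CSLCycle.zig_of_fin
    intro k
    have refl : ∀ N : Submodule ℂ H, CSLCycle.Rel U N N 1 := fun N =>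
      ⟨one_ne_zero, le_rfl, fun x h1 h2 => (one_smul _ _).symm⟩
    rcases hcomp k with h | h
    · exact ⟨M k.succ, lam k, 1, ⟨hM _, hM _, hM _, ⟨hlam k, h, (hUp k h).1⟩, refl _⟩, by simp⟩
    · exact ⟨M k.castSucc, 1, (lam k)⁻¹,
        ⟨hM _, hM _, hM _, refl _, ⟨inv_ne_zero (hlam k), h, (hDown k h).1⟩⟩, by simp⟩
  rw [hcycle] at hz
  exact CSLCycle.cyc_induct
    (CSLCycle.exists_rel hL.toIsSubspaceLattice hrank U V hUV)
    (fun A B => A ⊓ B = ⊥) (fun A B => (minus L A)ᗮ ⊓ (minus L B)ᗮ = ⊥)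
    (fun A hA B hB h => CSLCycle.exists_inf hL.toIsSubspaceLattice hA hB h)
    (fun A hA B hB h => CSLCycle.exists_sup hL.toIsSubspaceLattice hA hB h)
    (CSLCycle.main_case hL hlin hrank U V hUV) n _ _ hz
end

section
/- Let L be a completely distributive commutative subspace lattice on H and let N, N' ∈ F. If N' ∉ 𝔊_N, then M ∩ M' = {0} for every M ∈ 𝔊_N and every M' ∈ 𝔊_{N'}; moreover G_N ⊥ G_{N'} and F_N ⊥ F_{N'}, where G_M = ⋁{K : K ∈ 𝔊_M} and F_M = ⋁{K₋^⊥ : K ∈ 𝔊_M}. -/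
open scoped InnerProductSpace

def stepRel {H : Type*} [NormedAddCommGroup H] [InnerProductSpace ℂ H]
    (L : Set (Submodule ℂ H)) (A B : Submodule ℂ H) : Prop :=
  A ∈ famF L ∧ B ∈ famF L ∧ Comparable' A B

theorem small_of_sep (H : Type*) [NormedAddCommGroup H]
    [TopologicalSpace.SeparableSpace H] : Small.{0} H := by
  have hinj : Function.Injective
      (fun (x : H) (n : ℕ) => dist x (TopologicalSpace.denseSeq H n)) := by
    intro x y hxy
    have hd := TopologicalSpace.denseRange_denseSeq H
    have : (fun z => dist x z) = (fun z => dist y z) := by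
      apply hd.equalizer (by fun_prop) (by fun_prop)
      funext n
      exact congrFun hxy n
    have h2 := congrFun this y
    simpa using h2
  exact small_of_injective hinj

theorem small_submodule (H : Type*) [NormedAddCommGroup H] [InnerProductSpace ℂ H]
    [TopologicalSpace.SeparableSpace H] : Small.{0} (Submodule ℂ H) := by
  haveI := small_of_sep H
  haveI : Small.{0} (Set H) := inferInstance
  exact small_of_injective (f := fun S : Submodule ℂ H => (S : Set H)) SetLike.coe_injective

theorem le_closedJoin {H : Type*} [NormedAddCommGroup H] [InnerProductSpace ℂ H]
    {S : Set (Submodule ℂ H)} {A : Submodule ℂ H} (hA : A ∈ S) : A ≤ closedJoin S :=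
  (le_sSup hA).trans (Submodule.le_topologicalClosure _)

theorem closedJoin_le {H : Type*} [NormedAddCommGroup H] [InnerProductSpace ℂ H]
    {S : Set (Submodule ℂ H)} {A : Submodule ℂ H} (hc : IsClosed (A : Set H))
    (hA : ∀ B ∈ S, B ≤ A) : closedJoin S ≤ A :=
  Submodule.topologicalClosure_minimal _ (sSup_le hA) hc

theorem raney {H : Type*} [NormedAddCommGroup H] [InnerProductSpace ℂ H]
    [TopologicalSpace.SeparableSpace H]
    (L : Set (Submodule ℂ H)) (hL : IsSubspaceLattice L) (hcd : IsCompletelyDistributive L)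
    (E : Submodule ℂ H) (hE : E ∈ L) (X : Submodule ℂ H)
    (hX : ∀ K ∈ L, ¬ K ≤ E → X ≤ minus L K) : X ≤ E := by
  haveI := small_submodule H
  let I : Type := Shrink.{0} {K : Submodule ℂ H // K ∈ L ∧ ¬ K ≤ E}
  let k : I → {K : Submodule ℂ H // K ∈ L ∧ ¬ K ≤ E} := (equivShrink _).symm
  let J : I → Type := fun i => Shrink.{0} {D : Submodule ℂ H // D ∈ L ∧ ¬ (k i).1 ≤ D}
  let d : (i : I) → J i → {D : Submodule ℂ H // D ∈ L ∧ ¬ (k i).1 ≤ D} :=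
    fun i => (equivShrink _).symm
  have key := (hcd I J (fun i j => (d i j).1) (fun i j => (d i j).2.1)).1
  have h1 : X ≤ ⨅ i, closedJoin (Set.range (fun j => (d i j).1)) := by
    refine le_iInf fun i => ?_
    have h2 : Set.range (fun j => (d i j).1) = {D | D ∈ L ∧ ¬ (k i).1 ≤ D} := by
      ext D
      constructor
      · rintro ⟨j, rfl⟩
        exact (d i j).2
      · intro hD
        exact ⟨equivShrink _ ⟨D, hD⟩, by simp [d]⟩
    rw [h2]
    exact hX _ (k i).2.1 (k i).2.2
  refine h1.trans ?_
  rw [key]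
  refine closedJoin_le (hL.isClosed E hE) ?_
  rintro _ ⟨φ, rfl⟩
  by_contra hcon
  have hmem : (⨅ i, (d i (φ i)).1) ∈ L := by
    rw [iInf]
    refine hL.sInf_mem _ ?_
    rintro _ ⟨i, rfl⟩
    exact (d i (φ i)).2.1
  let i0 : I := equivShrink _ ⟨⨅ i, (d i (φ i)).1, hmem, hcon⟩
  have h3 : (k i0).1 = ⨅ i, (d i (φ i)).1 := by simp [k, i0]
  apply (d i0 (φ i0)).2.2
  exact h3.le.trans (iInf_le (fun i => (d i (φ i)).1) i0)

theorem le_minus {H : Type*} [NormedAddCommGroup H] [InnerProductSpace ℂ H]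
    {L : Set (Submodule ℂ H)} {M K : Submodule ℂ H} (hK : K ∈ L) (h : ¬ K ≤ minus L M) :
    M ≤ K := by
  by_contra h2
  exact h (le_closedJoin (S := {E | E ∈ L ∧ ¬ M ≤ E}) ⟨hK, h2⟩)

theorem chain_iff {H : Type*} [NormedAddCommGroup H] [InnerProductSpace ℂ H]
    {L : Set (Submodule ℂ H)} {A B : Submodule ℂ H} (hA : A ∈ famF L) :
    ChainConn L A B ↔ Relation.ReflTransGen (stepRel L) A B := by
  constructor
  · rintro ⟨n, c, hc, rfl, rfl, hs⟩
    have : ∀ k : Fin (n + 1), Relation.ReflTransGen (stepRel L) (c 0) (c k) := by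
      intro k
      induction k using Fin.induction with
      | zero => exact .refl
      | succ i ih => exact ih.tail ⟨hc _, hc _, hs i⟩
    exact this _
  · intro h
    induction h with
    | refl => exact ⟨0, fun _ => A, fun _ => hA, rfl, rfl, fun k => k.elim0⟩
    | tail _ hbc ih =>
      rename_i b C _
      obtain ⟨n, c, hc, h0, hl, hs⟩ := ih
      refine ⟨n + 1, Fin.snoc (α := fun _ => Submodule ℂ H) c C, ?_, ?_, ?_, ?_⟩
      · intro k
        induction k using Fin.lastCases with
        | last => simpa using hbc.2.1
        | cast i => simpa using hc i
      · have : (0 : Fin (n + 1 + 1)) = Fin.castSucc 0 := rfl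
        rw [this, Fin.snoc_castSucc, h0]
      · simp
      · intro k
        induction k using Fin.lastCases with
        | last =>
          rw [Fin.snoc_castSucc, Fin.succ_last, Fin.snoc_last, hl]
          exact hbc.2.2
        | cast i =>
          rw [Fin.snoc_castSucc, Fin.succ_castSucc, Fin.snoc_castSucc]
          exact hs i

theorem stepRel_symm {H : Type*} [NormedAddCommGroup H] [InnerProductSpace ℂ H]
    (L : Set (Submodule ℂ H)) : Std.Symm (stepRel L) :=
  ⟨fun _ _ h => ⟨h.2.1, h.1, h.2.2.symm⟩⟩

theorem projOf_mem {H : Type*} [NormedAddCommGroup H] [InnerProductSpace ℂ H] [CompleteSpace H]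
    {E : Submodule ℂ H} (h : IsClosed (E : Set H)) (x : H) : projOf E x ∈ E := by
  simp [projOf, h]

theorem projOf_sub_mem {H : Type*} [NormedAddCommGroup H] [InnerProductSpace ℂ H]
    [CompleteSpace H]
    {E : Submodule ℂ H} (h : IsClosed (E : Set H)) (x : H) : x - projOf E x ∈ Eᗮ := by
  haveI : CompleteSpace E := h.completeSpace_coe
  simp only [projOf, h, dif_pos]
  exact Submodule.sub_starProjection_mem_orthogonal (K := E) x

theorem projOf_eq_self {H : Type*} [NormedAddCommGroup H] [InnerProductSpace ℂ H]
    [CompleteSpace H]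
    {E : Submodule ℂ H} (h : IsClosed (E : Set H)) {x : H} (hx : x ∈ E) : projOf E x = x := by
  have h1 : x - projOf E x ∈ E := E.sub_mem hx (projOf_mem h x)
  have h2 := Submodule.inner_right_of_mem_orthogonal h1 (projOf_sub_mem h x)
  exact (sub_eq_zero.1 (inner_self_eq_zero.1 h2)).symm

theorem projOf_eq_zero {H : Type*} [NormedAddCommGroup H] [InnerProductSpace ℂ H]
    [CompleteSpace H]
    {E : Submodule ℂ H} (h : IsClosed (E : Set H)) {x : H} (hx : x ∈ Eᗮ) :
    projOf E x = 0 := by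
  have h1 : projOf E x ∈ Eᗮ := by
    simpa using Eᗮ.sub_mem hx (projOf_sub_mem h x)
  have h2 := Submodule.inner_right_of_mem_orthogonal (projOf_mem h x) h1
  exact inner_self_eq_zero.1 h2

theorem mem_orth_of_projOf {H : Type*} [NormedAddCommGroup H] [InnerProductSpace ℂ H]
    [CompleteSpace H]
    {E : Submodule ℂ H} (h : IsClosed (E : Set H)) {x : H} (hx : projOf E x = 0) :
    x ∈ Eᗮ := by
  simpa [hx] using projOf_sub_mem h x

theorem orth_one {H : Type*} [NormedAddCommGroup H] [InnerProductSpace ℂ H] [CompleteSpace H]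
    {L : Set (Submodule ℂ H)} (hL : IsCSL L) {A B : Submodule ℂ H} (hA : A ∈ L) (hB : B ∈ L)
    (hAB : A ⊓ B = ⊥) : A ≤ Bᗮ := by
  intro a ha
  have cA := hL.isClosed A hA
  have cB := hL.isClosed B hB
  apply mem_orth_of_projOf cB
  have hc : projOf A (projOf B a) = projOf B (projOf A a) :=
    congrArg (fun T : H →L[ℂ] H => T a) (hL.commutes A hA B hB)
  rw [projOf_eq_self cA ha] at hc
  have : projOf B a ∈ A ⊓ B := ⟨hc ▸ projOf_mem cA _, projOf_mem cB _⟩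
  simpa [hAB] using this

theorem orth_two {H : Type*} [NormedAddCommGroup H] [InnerProductSpace ℂ H] [CompleteSpace H]
    {L : Set (Submodule ℂ H)} (hL : IsCSL L) {A B : Submodule ℂ H} (hA : A ∈ L) (hB : B ∈ L)
    (hAB : closedJoin {A, B} = ⊤) : Aᗮ ≤ Bᗮᗮ := by
  intro a ha
  have cA := hL.isClosed A hA
  have cB := hL.isClosed B hB
  apply Submodule.le_orthogonal_orthogonal
  have hc : projOf A (projOf B a) = projOf B (projOf A a) :=
    congrArg (fun T : H →L[ℂ] H => T a) (hL.commutes A hA B hB)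
  rw [projOf_eq_zero cA ha, map_zero] at hc
  have h1 : a - projOf B a ∈ Aᗮ := Aᗮ.sub_mem ha (mem_orth_of_projOf cA hc)
  have h2 := projOf_sub_mem cB a
  have h3 : closedJoin {A, B} ≤ (ℂ ∙ (a - projOf B a))ᗮ := by
    refine closedJoin_le (Submodule.isClosed_orthogonal _) ?_
    rintro C (rfl | rfl)
    · rw [Submodule.le_orthogonal_iff_le_orthogonal]
      simpa using h1
    · rw [Submodule.le_orthogonal_iff_le_orthogonal]
      simpa using h2
  rw [hAB] at h3
  have h4 := Submodule.mem_orthogonal_singleton_iff_inner_right.1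
    (h3 (Submodule.mem_top (x := a - projOf B a)))
  rw [sub_eq_zero.1 (inner_self_eq_zero.1 h4)]
  exact projOf_mem cB a

theorem join_orth {H : Type*} [NormedAddCommGroup H] [InnerProductSpace ℂ H]
    {S T : Set (Submodule ℂ H)} (h : ∀ A ∈ S, ∀ B ∈ T, A ≤ Bᗮ) :
    closedJoin S ≤ (closedJoin T)ᗮ := by
  refine closedJoin_le (Submodule.isClosed_orthogonal _) fun A hA => ?_
  refine Submodule.IsOrtho.symm (?_ : _ ≤ _)
  refine closedJoin_le (Submodule.isClosed_orthogonal _) fun B hB => ?_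
  refine Submodule.IsOrtho.symm (?_ : _ ≤ _)
  exact h A hA B hB

theorem stmt_13 {H : Type*} [NormedAddCommGroup H] [InnerProductSpace ℂ H]
    [CompleteSpace H] [TopologicalSpace.SeparableSpace H]
    (L : Set (Submodule ℂ H)) (hL : IsCSL L) (hcd : IsCompletelyDistributive L)
    (N N' : Submodule ℂ H) (hN : N ∈ famF L) (hN' : N' ∈ famF L)
    (h : N' ∉ GSet L N) :
    (∀ M ∈ GSet L N, ∀ M' ∈ GSet L N', M ⊓ M' = ⊥) ∧
    closedJoin (GSet L N) ≤ (closedJoin (GSet L N'))ᗮ ∧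
    closedJoin ((fun M => ((minus L M)ᗮ : Submodule ℂ H)) '' GSet L N)
      ≤ (closedJoin ((fun M => ((minus L M)ᗮ : Submodule ℂ H)) '' GSet L N'))ᗮ := by
  have hsL := hL.toIsSubspaceLattice
  have conn : ∀ M ∈ GSet L N, ∀ M' ∈ GSet L N', ∀ K ∈ famF L,
      Comparable' M K → Comparable' K M' → False := by
    intro M hM M' hM' K hK h1 h2
    apply h
    refine ⟨hN', (chain_iff hN).2 ?_⟩
    have a1 := (chain_iff hN).1 hM.2
    have a2 := (chain_iff hN').1 hM'.2
    haveI := stepRel_symm L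
    have a3 : Relation.ReflTransGen (stepRel L) M' N' := by
      clear * - a2
      induction a2 with
      | refl => exact .refl
      | tail _ hs ih => exact .head ⟨hs.2.1, hs.1, hs.2.2.symm⟩ ih
    exact ((a1.tail ⟨hM.1, hK, h1⟩).tail ⟨hK, hM'.1, h2⟩).trans a3
  have inf0 : ∀ M ∈ GSet L N, ∀ M' ∈ GSet L N', M ⊓ M' = ⊥ := by
    intro M hM M' hM'
    have hmem : M ⊓ M' ∈ L := by
      rw [← sInf_pair]
      refine hsL.sInf_mem _ ?_
      rintro _ (rfl | rfl)
      exacts [hM.1.1, hM'.1.1]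
    rw [eq_bot_iff]
    refine raney L hsL hcd ⊥ hsL.bot_mem _ fun K hK hK0 => ?_
    by_contra hcon
    have hle := le_minus hmem hcon
    refine conn M hM M' hM' K ⟨hK, fun h0 => hK0 h0.le, fun ht => hcon (ht ▸ le_top)⟩
      (Or.inr (hle.trans inf_le_left)) (Or.inl (hle.trans inf_le_right))
  refine ⟨inf0, join_orth fun A hA B hB => orth_one hL hA.1.1 hB.1.1 (inf0 A hA B hB),
    join_orth ?_⟩
  rintro _ ⟨M, hM, rfl⟩ _ ⟨M', hM', rfl⟩
  have mm : ∀ M, minus L M ∈ L := fun M => hsL.join_mem _ fun E hE => hE.1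
  refine orth_two hL (mm M) (mm M') ?_
  have hmem : closedJoin {minus L M, minus L M'} ∈ L := by
    refine hsL.join_mem _ ?_
    rintro _ (rfl | rfl)
    exacts [mm _, mm _]
  rw [eq_top_iff]
  refine raney L hsL hcd _ hmem _ fun K hK hKE => ?_
  by_contra hcon
  have l1 : minus L M ≤ closedJoin {minus L M, minus L M'} := le_closedJoin (by simp)
  have l2 : minus L M' ≤ closedJoin {minus L M, minus L M'} := le_closedJoin (by simp)
  refine conn M hM M' hM' K ⟨hK, fun h0 => hKE (h0 ▸ bot_le), fun ht => hcon ht.ge⟩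
    (Or.inl (le_minus hK fun h => hKE (h.trans l1)))
    (Or.inr (le_minus hK fun h => hKE (h.trans l2)))
end
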